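/- Let G be a sofic countably infinite group with sofic approximation sequence Σ. Suppose G ↷ X is expansive and has the topological Markov property. Let k ∈ ℕ and (x₁,…,x_k,x_{k+1}) ∈ X^{k+1} be such that (x₁,…,x_k) is a Σ-IE-tuple and (x_k,x_{k+1}) is an asymptotic pair. Then (x₁,…,x_k,x_{k+1}) is a Σ-IE-tuple. -/

import Mathlib

open Pointwise

/-- Supremum over `g ∈ K` of `ρ (g • x) (g • y)`. -/
noncomputable def supOf {G X : Type*} [SMul G X] (ρ : X → X → ℝ) (K : Set G) (x y : X) : ℝ :=
  ⨆ g : K, ρ ((g : G) • x) ((g : G) • y)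

/-- `d_K(x,y) = sup_{g ∈ K} d(g x, g y)`. -/
noncomputable def supD {G X : Type*} [SMul G X] [PseudoMetricSpace X] (K : Set G) (x y : X) : ℝ :=
  supOf dist K x y

/-- `B` is an `(ε,δ)`-memory set for `A`. -/
def IsMemorySet (G X : Type*) [SMul G X] [PseudoMetricSpace X] (ε δ : ℝ)
    (A B : Finset G) : Prop :=
  (A : Set G) ⊆ (B : Set G) ∧
    ∀ x y : X, supD ((B : Set G) \ (A : Set G)) x y ≤ δ →
      ∃ z : X, supD (B : Set G) x z ≤ ε ∧ supD (Set.univ \ (A : Set G)) y z ≤ ε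

/-- The topological Markov property. -/
def TMP (G X : Type*) [SMul G X] [PseudoMetricSpace X] : Prop :=
  ∀ ε > (0 : ℝ), ∃ δ > (0 : ℝ), ∀ A : Finset G, ∃ B : Finset G, IsMemorySet G X ε δ A B

/-- The strong topological Markov property. -/
def StrongTMP (G X : Type*) [Group G] [DecidableEq G] [MulAction G X]
    [PseudoMetricSpace X] : Prop :=
  ∀ ε > (0 : ℝ), ∃ δ > (0 : ℝ), ∃ F : Finset G, (1 : G) ∈ F ∧
    ∀ A : Finset G, IsMemorySet G X ε δ A (F * A)

/-- `V` is `B`-separated. -/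
def Separated {G : Type*} [Mul G] (B V : Set G) : Prop :=
  ∀ v₁ ∈ V, ∀ v₂ ∈ V, v₁ ≠ v₂ → Disjoint (B * ({v₁} : Set G)) (B * ({v₂} : Set G))

/-- `B` is a uniform `(ε,δ)`-memory set for `A`. -/
def IsUniformMemorySet (G X : Type*) [Group G] [MulAction G X] [PseudoMetricSpace X]
    (ε δ : ℝ) (A B : Finset G) : Prop :=
  IsMemorySet G X ε δ A B ∧
    ∀ V : Finset G, Separated (B : Set G) (V : Set G) →
      ∀ (xv : G → X) (y : X),
        (∀ v ∈ V, supD (((B : Set G) \ (A : Set G)) * ({v} : Set G)) (xv v) y ≤ δ) →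
        ∃ z : X, (∀ v ∈ V, supD ((B : Set G) * ({v} : Set G)) z (xv v) ≤ ε) ∧
          supD (Set.univ \ ((A : Set G) * (V : Set G))) z y ≤ ε

/-- The uniform topological Markov property. -/
def UniformTMP (G X : Type*) [Group G] [MulAction G X] [PseudoMetricSpace X] : Prop :=
  ∀ ε > (0 : ℝ), ∃ δ > (0 : ℝ), ∀ A : Finset G, ∃ B : Finset G,
    IsUniformMemorySet G X ε δ A B

/-- The uniform strong topological Markov property. -/
def UniformStrongTMP (G X : Type*) [Group G] [DecidableEq G] [MulAction G X]
    [PseudoMetricSpace X] : Prop :=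
  ∀ ε > (0 : ℝ), ∃ δ > (0 : ℝ), ∃ F : Finset G, (1 : G) ∈ F ∧
    ∀ A : Finset G, IsUniformMemorySet G X ε δ A (F * A)

/-- Expansivity of the action. -/
def Expansive (G X : Type*) [SMul G X] [PseudoMetricSpace X] : Prop :=
  ∃ c > (0 : ℝ), ∀ x y : X, x ≠ y → ∃ g : G, dist (g • x) (g • y) > c

/-- `(x,y)` is an asymptotic pair. -/
def Asymptotic (G : Type*) {X : Type*} [SMul G X] [PseudoMetricSpace X] (x y : X) : Prop :=
  ∀ ε > (0 : ℝ), ∃ F : Finset G, ∀ g ∉ F, dist (g • x) (g • y) ≤ ε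

/-- `(S,δ)` pseudo-orbit. -/
def IsPseudoOrbit {G X : Type*} [Mul G] [SMul G X] [PseudoMetricSpace X]
    (S : Finset G) (δ : ℝ) (w : G → X) : Prop :=
  ∀ s ∈ S, ∀ g : G, dist (s • w g) (w (s * g)) < δ

/-- `w` is `ε`-traced by `x`. -/
def Traces {G X : Type*} [SMul G X] [PseudoMetricSpace X] (ε : ℝ) (x : X) (w : G → X) : Prop :=
  ∀ g : G, dist (g • x) (w g) ≤ ε

/-- Pseudo-orbit tracing property. -/
def POTP (G X : Type*) [Mul G] [SMul G X] [PseudoMetricSpace X] : Prop :=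
  ∀ ε > (0 : ℝ), ∃ δ > (0 : ℝ), ∃ S : Finset G, ∀ w : G → X,
    IsPseudoOrbit S δ w → ∃ x : X, Traces ε x w

/-- `J` is an independence set for the tuple `U`. -/
def IndepSet {G X : Type*} [SMul G X] {n : ℕ} (U : Fin n → Set X) (J : Set G) : Prop :=
  ∀ I : Finset G, (I : Set G) ⊆ J → I.Nonempty → ∀ φ : G → Fin n,
    (⋂ s ∈ I, (fun x : X => s • x) ⁻¹' U (φ s)).Nonempty

/-- The tuple `U` has positive independence density. -/
def PosIndepDensity (G : Type*) {X : Type*} [SMul G X] {n : ℕ} (U : Fin n → Set X) : Prop :=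
  ∃ q > (0 : ℝ), ∀ F : Finset G, ∃ J : Finset G, J ⊆ F ∧
    q * (F.card : ℝ) ≤ (J.card : ℝ) ∧ IndepSet U (J : Set G)

/-- Orbit IE-tuple. -/
def IETuple (G : Type*) {X : Type*} [SMul G X] [TopologicalSpace X] {n : ℕ}
    (x : Fin n → X) : Prop :=
  ∀ U : Fin n → Set X, (∀ i, IsOpen (U i)) → (∀ i, x i ∈ U i) → PosIndepDensity G U

/-- Minimality of the action. -/
def MinimalAction (G X : Type*) [SMul G X] [TopologicalSpace X] : Prop :=
  ∀ Y : Set X, IsClosed Y → (∀ g : G, ∀ y ∈ Y, g • y ∈ Y) → Y.Nonempty → Y = Set.univ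

/-- Følner sequence. -/
def FolnerSeq (G : Type*) [Group G] [DecidableEq G] (F : ℕ → Finset G) : Prop :=
  (∀ n, (F n).Nonempty) ∧
    ∀ K : Finset G, Filter.Tendsto
      (fun n => ((symmDiff (K * F n) (F n)).card : ℝ) / ((F n).card : ℝ))
      Filter.atTop (nhds 0)

/-- `(σ_i : G → Sym(n_i))` is a sofic approximation sequence for `G`. -/
def SoficApprox (G : Type*) [Group G] (n : ℕ → ℕ)
    (σ : ∀ i : ℕ, G → Equiv.Perm (Fin (n i))) : Prop :=
  Filter.Tendsto n Filter.atTop Filter.atTop ∧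
  (∀ s t : G, Filter.Tendsto
      (fun i => (((Finset.univ.filter fun v : Fin (n i) =>
          σ i (s * t) v = σ i s (σ i t v)).card : ℝ) / (n i : ℝ)))
      Filter.atTop (nhds 1)) ∧
  (∀ s t : G, s ≠ t → Filter.Tendsto
      (fun i => (((Finset.univ.filter fun v : Fin (n i) =>
          σ i s v ≠ σ i t v).card : ℝ) / (n i : ℝ)))
      Filter.atTop (nhds 1))

/-- `φ ∈ Map(d,F,δ,σ)`. -/
def InSoficMap {G X : Type*} [SMul G X] [PseudoMetricSpace X]
    (F : Finset G) (δ : ℝ) {n : ℕ} (σ : G → Equiv.Perm (Fin n)) (φ : Fin n → X) : Prop :=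
  ∀ s ∈ F, Real.sqrt ((1 / (n : ℝ)) * ∑ v : Fin n, dist (φ (σ s v)) (s • φ v) ^ 2) ≤ δ

/-- `J` is a `(d,F,δ,σ)`-independence set for the tuple `U`. -/
def SoficIndepSet {G X : Type*} [SMul G X] [PseudoMetricSpace X] {m : ℕ}
    (U : Fin m → Set X) (F : Finset G) (δ : ℝ) {n : ℕ}
    (σ : G → Equiv.Perm (Fin n)) (J : Finset (Fin n)) : Prop :=
  ∀ ω : Fin n → Fin m, ∃ φ : Fin n → X,
    InSoficMap F δ σ φ ∧ ∀ a ∈ J, φ a ∈ U (ω a)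

/-- The tuple `U` has positive upper independence density over `Σ = (n, σ)`. -/
def PosUpperIndepDensity {G X : Type*} [SMul G X] [PseudoMetricSpace X] {m : ℕ}
    (U : Fin m → Set X) (n : ℕ → ℕ) (σ : ∀ i : ℕ, G → Equiv.Perm (Fin (n i))) : Prop :=
  ∃ q > (0 : ℝ), ∀ F : Finset G, ∀ δ > (0 : ℝ),
    {i : ℕ | ∃ J : Finset (Fin (n i)),
      q * (n i : ℝ) ≤ (J.card : ℝ) ∧ SoficIndepSet U F δ (σ i) J}.Infinite

/-- `(x₁,…,x_m)` is a `Σ`-IE-tuple. -/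
def SigmaIETuple {G X : Type*} [SMul G X] [PseudoMetricSpace X] {m : ℕ}
    (n : ℕ → ℕ) (σ : ∀ i : ℕ, G → Equiv.Perm (Fin (n i))) (x : Fin m → X) : Prop :=
  ∀ U : Fin m → Set X, (∀ i, IsOpen (U i)) → (∀ i, x i ∈ U i) →
    PosUpperIndepDensity U n σ

/-!
Expansivity upgrades the topological Markov property to its uniform version: patches far apart can
be glued into a given point simultaneously. They are inserted one at a time, and errors do not
accumulate because a gluing that is merely `c`-close along a window of expansivity is already
`ε`-close at its center.

Let `(x_k, y)` be asymptotic, take a finite `A ∋ 1` off which the two orbits are close, and let `B`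
be a uniform memory set for `A`. An independence set `J` for small neighborhoods of
`(x₁, …, x_k)` contains a positive proportion of vertices whose `B`-patches are disjoint. Given
`ω`, realize it by an approximately equivariant `φ` with `y` replaced by `x_k`. Then modify `φ`
at almost every vertex `v`, where `σ` looks like `G`: into `φ v` glue the translate `u⁻¹ • y` for
each `u` in a large window such that `ω` asks for `y` at `σ u v`. This is possible since `φ (σ u v)`
and `y` have close orbits along `B \ A`. The modified map is still approximately equivariant: at
`v` and at `σ s v` the same copies of `y` are visible up to the shift by `s`, and comparing along
a finite window suffices by expansivity.
-/

section SupMetric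

theorem supD_le_iff {G X : Type*} [SMul G X] [PseudoMetricSpace X] [BoundedSpace X]
    {K : Set G} {x y : X} {ε : ℝ} (hε : 0 ≤ ε) :
    supD K x y ≤ ε ↔ ∀ g ∈ K, dist (g • x) (g • y) ≤ ε := by
  refine ⟨fun h g hg => ?_, fun h => Real.iSup_le (fun g => h g g.2) hε⟩
  have hbdd : BddAbove (Set.range fun g : K => dist ((g : G) • x) ((g : G) • y)) := by
    refine ⟨Metric.diam (Set.univ : Set X), ?_⟩
    rintro _ ⟨g, rfl⟩
    exact Metric.dist_le_diam_of_mem (.all _) (Set.mem_univ _) (Set.mem_univ _)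
  exact (le_ciSup hbdd ⟨g, hg⟩).trans h

end SupMetric

section Separated

variable {G : Type*} [Mul G] {B V : Set G}

theorem separated_iff :
    Separated B V ↔
      ∀ v ∈ V, ∀ v' ∈ V, ∀ b ∈ B, ∀ b' ∈ B, b * v = b' * v' → v = v' := by
  simp only [Separated, Set.disjoint_left, Set.mem_mul, Set.mem_singleton_iff, exists_eq_left]
  grind

theorem Separated.mono {V' : Set G} (h : Separated B V) (hV : V' ⊆ V) : Separated B V' :=
  fun v hv v' hv' => h v (hV hv) v' (hV hv')

theorem separated_singleton (v : G) : Separated B {v} := by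
  rintro _ rfl _ rfl h
  exact absurd rfl h

theorem Separated.mul_notMem_mul {A : Set G} {v b : G} (h : Separated B V) (hAB : A ⊆ B)
    (hv : v ∈ V) (hb : b ∈ B) (hbv : b * v ∉ A * ({v} : Set G)) : b * v ∉ A * V := by
  rintro ⟨a, ha, v', hv', heq⟩
  obtain rfl := separated_iff.1 h v' hv' v hv a (hAB ha) b hb heq
  exact hbv ⟨a, ha, v', rfl, heq⟩

end Separated

section Expansivity

/-- `W` is a window at scale `η` for the expansivity constant `c`: two points whose orbits stay
`c`-close along `W` are `η`-close. -/
def IsExpansivityWindow {G : Type*} (X : Type*) [SMul G X] [PseudoMetricSpace X]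
    (W : Set G) (c η : ℝ) : Prop :=
  ∀ x y : X, (∀ g ∈ W, dist (g • x) (g • y) ≤ c) → dist x y ≤ η

/-- Expansivity witnessed by finite windows; on a compact space this is plain expansivity. -/
def UniformlyExpansive (G X : Type*) [SMul G X] [PseudoMetricSpace X] : Prop :=
  ∃ c > (0 : ℝ), ∀ η > (0 : ℝ), ∃ W : Finset G, IsExpansivityWindow X (W : Set G) c η

theorem Expansive.uniformlyExpansive {G X : Type*} [SMul G X] [PseudoMetricSpace X]
    [CompactSpace X] [ContinuousConstSMul G X] (h : Expansive G X) : UniformlyExpansive G X := by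
  obtain ⟨c, hc, hsep⟩ := h
  refine ⟨c, hc, fun η hη => ?_⟩
  have hcompact : IsCompact {p : X × X | η ≤ dist p.1 p.2} :=
    (isClosed_le continuous_const (by fun_prop)).isCompact
  obtain ⟨W, hW⟩ := hcompact.elim_finite_subcover
    (fun g : G => {p : X × X | c < dist (g • p.1) (g • p.2)})
    (fun g => isOpen_lt continuous_const (by fun_prop)) (by
      rintro ⟨x, y⟩ (hxy : η ≤ dist x y)
      have hne : x ≠ y := by
        rintro rfl
        exact (hη.trans_le hxy).ne' (dist_self x)
      exact Set.mem_iUnion.2 (hsep x y hne))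
  refine ⟨W, fun x y hclose => le_of_not_ge fun hxy => ?_⟩
  obtain ⟨g, hg, hlt⟩ := Set.mem_iUnion₂.1 (hW (show (x, y) ∈ {p : X × X | _} from hxy))
  exact (hclose g hg).not_gt hlt

end Expansivity

section Gluing

variable {G X : Type*} [Group G] [PseudoMetricSpace X] [MulAction G X]

/-- `z` glues the points `x v`, `v ∈ V`, into `y` up to `ε`: its orbit follows that of `x v` on
the patch `B * {v}` and that of `y` outside `A * V`. -/
structure IsGluing (A B V : Set G) (x : G → X) (y : X) (ε : ℝ) (z : X) : Prop where
  near : ∀ v ∈ V, ∀ b ∈ B, dist ((b * v) • z) ((b * v) • x v) ≤ ε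
  far : ∀ g ∉ A * V, dist (g • z) (g • y) ≤ ε

namespace IsGluing

variable {A B D E V : Set G} {x w : G → X} {y z : X} {r s ε δ c : ℝ}

theorem self_empty (hε : 0 ≤ ε) : IsGluing A B ∅ x y ε y :=
  ⟨by simp only [Set.mem_empty_iff_false, false_imp_iff, implies_true], fun g _ => by simpa⟩

theorem mono (hz : IsGluing A E V x y r z) (hBE : B ⊆ E) (hrs : r ≤ s) :
    IsGluing A B V x y s z :=
  ⟨fun v hv b hb => (hz.near v hv b (hBE hb)).trans hrs, fun g hg => (hz.far g hg).trans hrs⟩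

theorem enlarge_patch (hz : IsGluing A B V x y ε z) (hAB : A ⊆ B) (hBE : B ⊆ E)
    (hV : Separated E V) (hδ : 0 ≤ δ)
    (hxy : ∀ v ∈ V, ∀ e ∈ E \ A, dist ((e * v) • x v) ((e * v) • y) ≤ δ) :
    IsGluing A E V x y (ε + δ) z := by
  refine ⟨fun v hv e he => ?_, fun g hg => (hz.far g hg).trans (by linarith)⟩
  by_cases heB : e ∈ B
  · exact (hz.near v hv e heB).trans (by linarith)
  · have heA : e ∉ A := fun h => heB (hAB h)
    have hzy := hz.far _ (hV.mul_notMem_mul (hAB.trans hBE) hv he (by simpa using heA))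
    exact (dist_triangle_right _ _ _).trans (add_le_add hzy (hxy v hv e ⟨he, heA⟩))

theorem trans_near (hz : IsGluing A B V w y r z)
    (hw : ∀ v ∈ V, IsGluing A B {v} x y s (w v)) (hs : 0 ≤ s) :
    IsGluing A B V x y (r + s) z :=
  ⟨fun v hv b hb => (dist_triangle _ _ _).trans
      (add_le_add (hz.near v hv b hb) ((hw v hv).near v rfl b hb)),
    fun g hg => (hz.far g hg).trans (by linarith)⟩

/-- Two orbits that are `c`-close along a window are `ε`-close, so a crude gluing is automatically
a precise one away from the boundary of its patches. -/
theorem sharpen {W : Set G} (hW : IsExpansivityWindow X W c ε)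
    (hz : IsGluing A (W * D) V w y c z) (hWA : W⁻¹ * A ⊆ D) : IsGluing D D V w y ε z := by
  refine ⟨fun v hv d hd => hW _ _ fun g hg => ?_, fun h hh => hW _ _ fun g hg => ?_⟩
  · simpa only [mul_smul] using hz.near v hv (g * d) (Set.mul_mem_mul hg hd)
  · rw [← mul_smul, ← mul_smul]
    refine hz.far (g * h) ?_
    rintro ⟨a, ha, v, hv, heq⟩
    refine hh ⟨g⁻¹ * a, hWA (Set.mul_mem_mul (Set.inv_mem_inv.2 hg) ha), v, hv, ?_⟩
    simp only [mul_assoc] at heq ⊢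
    rw [heq, inv_mul_cancel_left]

theorem extend (hz : IsGluing D D V w y r z)
    (hw : ∀ v ∈ V, ∀ g ∉ A * ({v} : Set G), dist (g • w v) (g • y) ≤ s) (hs : 0 ≤ s)
    (hAD : A ⊆ D) (hDE : D ⊆ E) (hV : Separated E V) : IsGluing A E V w y (r + s) z := by
  refine ⟨fun v hv e he => ?_, fun g hg => ?_⟩
  · by_cases heD : e ∈ D
    · exact (hz.near v hv e heD).trans (by linarith)
    · have hzy := hz.far _ (hV.mul_notMem_mul hDE hv he (by simpa using heD))
      have hwy := hw v hv (e * v) (by simpa using fun h => heD (hAD h))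
      exact (dist_triangle_right _ _ _).trans (add_le_add hzy hwy)
  · by_cases hgD : g ∈ D * V
    · obtain ⟨d, hd, v, hv, rfl⟩ := hgD
      have hwy := hw v hv (d * v) fun h =>
        hg (Set.mul_subset_mul_left (Set.singleton_subset_iff.2 hv) h)
      exact (dist_triangle _ _ _).trans (add_le_add (hz.near v hv d hd) hwy)
    · exact (hz.far g hgD).trans (by linarith)

theorem insert_patch {v₀ : G} {z' : X} (hz : IsGluing A E V w y r z)
    (hz' : IsGluing A B {v₀} x z ε z') (hw₀ : IsGluing A B {v₀} x y ε (w v₀)) (hε : 0 ≤ ε)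
    (hr : 0 ≤ r) (hv₀ : v₀ ∉ V) (hAB : A ⊆ B) (hBE : B ⊆ E) (hsep : Separated E (insert v₀ V)) :
    IsGluing A E (insert v₀ V) w y (r + 2 * ε) z' := by
  have hAE : A ⊆ E := hAB.trans hBE
  have hfar : ∀ v ∈ insert v₀ V, ∀ v' ∈ insert v₀ V, v ≠ v' → ∀ e ∈ E,
      e * v ∉ A * ({v'} : Set G) := by
    rintro v hv v' hv' hne e he ⟨a, ha, _, rfl, heq⟩
    exact hne (separated_iff.1 hsep v hv _ hv' e he a (hAE ha) heq.symm)
  refine ⟨fun v hv e he => ?_, fun g hg => ?_⟩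
  · rcases Set.mem_insert_iff.1 hv with rfl | hvV
    · by_cases heA : e ∈ A
      · have h₁ := hz'.near v rfl e (hAB heA)
        have h₂ := hw₀.near v rfl e (hAB heA)
        linarith [dist_triangle_right ((e * v) • z') ((e * v) • w v) ((e * v) • x v)]
      · have heA' : e * v ∉ A * ({v} : Set G) := by simpa using heA
        have heV : e * v ∉ A * V := fun h => hsep.mul_notMem_mul hAE hv he heA'
          (Set.mul_subset_mul_left (Set.subset_insert _ _) h)
        have h₁ := hz'.far _ heA'
        have h₂ := hz.far _ heV
        have h₃ := hw₀.far _ heA'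
        linarith [dist_triangle4_right ((e * v) • z') ((e * v) • w v) ((e * v) • z)
          ((e * v) • y)]
    · have hne : v ≠ v₀ := fun h => hv₀ (h ▸ hvV)
      have h₁ := hz'.far _ (hfar v hv v₀ (Set.mem_insert _ _) hne e he)
      have h₂ := hz.near v hvV e he
      linarith [dist_triangle ((e * v) • z') ((e * v) • z) ((e * v) • w v)]
  · have h₁ := hz'.far g fun h => hg
      (Set.mul_subset_mul_left (Set.singleton_subset_iff.2 (Set.mem_insert _ _)) h)
    have h₂ := hz.far g fun h => hg (Set.mul_subset_mul_left (Set.subset_insert _ _) h)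
    linarith [dist_triangle (g • z') (g • z) (g • y)]

end IsGluing

variable [BoundedSpace X] {A B : Finset G} {ε δ c : ℝ}

theorem isMemorySet_iff_isGluing (hε : 0 ≤ ε) (hδ : 0 ≤ δ) :
    IsMemorySet G X ε δ A B ↔ (A : Set G) ⊆ B ∧ ∀ (v : G) (x : G → X) (y : X),
      (∀ b ∈ (B : Set G) \ A, dist ((b * v) • x v) ((b * v) • y) ≤ δ) →
        ∃ z, IsGluing (A : Set G) B {v} x y ε z := by
  simp only [IsMemorySet, supD_le_iff hε, supD_le_iff hδ]
  refine and_congr_right fun _ => ⟨fun h v x y hxy => ?_, fun h x y hxy => ?_⟩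
  · obtain ⟨z, hnear, hfar⟩ := h (v • x v) (v • y) (by simpa only [mul_smul] using hxy)
    refine ⟨v⁻¹ • z, ?_, fun g hg => ?_⟩
    · rintro _ rfl b hb
      simpa only [mul_smul, smul_inv_smul, dist_comm] using hnear b hb
    · have hgA : g * v⁻¹ ∉ A := by simpa using hg
      simpa only [mul_smul, inv_smul_smul, dist_comm] using hfar (g * v⁻¹) ⟨trivial, hgA⟩
  · obtain ⟨z, hz⟩ := h 1 (fun _ => x) y (by simpa only [mul_one] using hxy)
    refine ⟨z, fun b hb => ?_, fun g hg => ?_⟩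
    · simpa only [mul_one, dist_comm] using hz.near 1 rfl b hb
    · simpa only [dist_comm] using hz.far g (by simpa using hg.2)

theorem isUniformMemorySet_iff_isGluing (hε : 0 ≤ ε) (hδ : 0 ≤ δ) :
    IsUniformMemorySet G X ε δ A B ↔ IsMemorySet G X ε δ A B ∧
      ∀ V : Finset G, Separated (B : Set G) V → ∀ (x : G → X) (y : X),
        (∀ v ∈ V, ∀ b ∈ (B : Set G) \ A, dist ((b * v) • x v) ((b * v) • y) ≤ δ) →
          ∃ z, IsGluing (A : Set G) B V x y ε z := by
  have hgluing : ∀ (V : Finset G) (x : G → X) (y z : X),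
      ((∀ v ∈ V, supD ((B : Set G) * ({v} : Set G)) z (x v) ≤ ε) ∧
        supD (Set.univ \ ((A : Set G) * (V : Set G))) z y ≤ ε) ↔
        IsGluing (A : Set G) B V x y ε z := by
    intro V x y z
    simp only [supD_le_iff hε, Set.mul_singleton, Set.forall_mem_image]
    exact ⟨fun h => ⟨h.1, fun g hg => h.2 g ⟨trivial, hg⟩⟩,
      fun h => ⟨h.near, fun g hg => h.far g hg.2⟩⟩
  simp only [IsUniformMemorySet, hgluing]
  simp only [supD_le_iff hδ, Set.mul_singleton, Set.forall_mem_image]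

/-- The expansivity window `W'` makes the gluing `z` so close to `y` on the new patch that the
memory property applies to `z` exactly as it would to `y`; then `W` undoes the loss of precision,
which is why errors do not accumulate. -/
theorem IsGluing.exists_insert_patch {D E W W' : Set G} {V : Finset G} {v₀ : G} {x w : G → X}
    {y z : X} (hB : IsMemorySet G X ε δ A B) (hε : 0 ≤ ε) (hδ : 0 ≤ δ) (hc : 4 * ε ≤ c)
    (hW : IsExpansivityWindow X W c ε) (hW' : IsExpansivityWindow X W' c (δ / 2))
    (hBD : (B : Set G) ⊆ D) (hWA : W⁻¹ * A ⊆ D) (hDE : D ⊆ E) (hWD : W * D ⊆ E)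
    (hWB : W' * B ⊆ E) (hv₀ : v₀ ∉ V) (hV : Separated E (insert v₀ V : Set G))
    (hw : ∀ v ∈ insert v₀ (V : Set G), IsGluing (A : Set G) B {v} x y ε (w v))
    (hxy : ∀ b ∈ (B : Set G) \ A, dist ((b * v₀) • x v₀) ((b * v₀) • y) ≤ δ / 2)
    (hz : IsGluing (A : Set G) E V w y (2 * ε) z) :
    ∃ z', IsGluing (A : Set G) E (insert v₀ V) w y (2 * ε) z' := by
  obtain ⟨hAB, hmem⟩ := (isMemorySet_iff_isGluing hε hδ).1 hB
  have hAE : (A : Set G) ⊆ E := (hAB.trans hBD).trans hDE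
  have hzy : ∀ b ∈ B, dist ((b * v₀) • z) ((b * v₀) • y) ≤ δ / 2 := by
    refine fun b hb => hW' _ _ fun g hg => ?_
    rw [← mul_smul, ← mul_smul]
    refine (hz.far (g * (b * v₀)) ?_).trans (by linarith)
    rintro ⟨a, ha, v, hv, heq⟩
    have hvv₀ := separated_iff.1 hV v (Set.mem_insert_of_mem _ hv) v₀ (Set.mem_insert _ _) a
      (hAE ha) (g * b) (hWB (Set.mul_mem_mul hg hb)) (by simpa only [mul_assoc] using heq)
    exact hv₀ (hvv₀ ▸ hv)
  obtain ⟨z', hz'⟩ := hmem v₀ x z fun b hb =>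
    (dist_triangle_right _ _ _).trans
      ((add_le_add (hxy b hb) (hzy b hb.1)).trans (add_halves δ).le)
  have hcrude := hz.insert_patch hz' (hw v₀ (Set.mem_insert _ _)) hε (by positivity) hv₀ hAB
    (hBD.trans hDE) hV
  have hsharp := (hcrude.mono hWD (show 2 * ε + 2 * ε ≤ c by linarith)).sharpen hW hWA
  refine ⟨z', ?_⟩
  rw [two_mul]
  exact hsharp.extend (fun v hv => (hw v hv).far) hε (hAB.trans hBD) hDE hV

theorem IsMemorySet.exists_isGluing {D E W W' : Set G} {V : Finset G} {x w : G → X} {y : X}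
    (hB : IsMemorySet G X ε δ A B) (hε : 0 ≤ ε) (hδ : 0 ≤ δ) (hc : 4 * ε ≤ c)
    (hW : IsExpansivityWindow X W c ε) (hW' : IsExpansivityWindow X W' c (δ / 2))
    (hBD : (B : Set G) ⊆ D) (hWA : W⁻¹ * A ⊆ D) (hDE : D ⊆ E) (hWD : W * D ⊆ E)
    (hWB : W' * B ⊆ E) (hV : Separated E (V : Set G))
    (hw : ∀ v ∈ V, IsGluing (A : Set G) B {v} x y ε (w v))
    (hxy : ∀ v ∈ V, ∀ b ∈ (B : Set G) \ A, dist ((b * v) • x v) ((b * v) • y) ≤ δ / 2) :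
    ∃ z, IsGluing (A : Set G) E V w y (2 * ε) z := by
  classical
  induction V using Finset.induction_on with
  | empty => exact ⟨y, by simpa using IsGluing.self_empty (by positivity)⟩
  | insert v₀ V hv₀ ih =>
    rw [Finset.coe_insert] at hV ⊢
    rw [Finset.forall_mem_insert] at hxy
    obtain ⟨z, hz⟩ := ih (hV.mono (Set.subset_insert _ _))
      (fun v hv => hw v (Finset.mem_insert_of_mem hv)) hxy.2
    exact hz.exists_insert_patch hB hε hδ hc hW hW' hBD hWA hDE hWD hWB hv₀ hV
      (by simpa using hw) hxy.1

theorem IsMemorySet.exists_isUniformMemorySet {W W' : Finset G} {η : ℝ}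
    (hB : IsMemorySet G X ε δ A B) (hε : 0 ≤ ε) (hδ : 0 ≤ δ) (hc : 4 * ε ≤ c) (hη : 4 * ε ≤ η)
    (hW : IsExpansivityWindow X (W : Set G) c ε)
    (hW' : IsExpansivityWindow X (W' : Set G) c (δ / 2)) :
    ∃ E, IsUniformMemorySet G X η (min (δ / 2) ε) A E := by
  classical
  let D := B ∪ W⁻¹ * A
  let E := D ∪ W * D ∪ W' * B
  obtain ⟨hAB, hmem⟩ := (isMemorySet_iff_isGluing hε hδ).1 hB
  have hBD : (B : Set G) ⊆ D := Finset.coe_subset.2 Finset.subset_union_left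
  have hWA : (W : Set G)⁻¹ * A ⊆ D := by exact_mod_cast Finset.subset_union_right
  have hDE : (D : Set G) ⊆ E := by
    exact_mod_cast Finset.subset_union_left.trans Finset.subset_union_left
  have hWD : (W : Set G) * D ⊆ E := by
    exact_mod_cast Finset.subset_union_right.trans Finset.subset_union_left
  have hWB : (W' : Set G) * B ⊆ E := by exact_mod_cast Finset.subset_union_right
  have hBE := hBD.trans hDE
  have hsingle : ∀ (v : G) (x : G → X) (y : X),
      (∀ e ∈ (E : Set G) \ A, dist ((e * v) • x v) ((e * v) • y) ≤ min (δ / 2) ε) →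
        ∃ w, IsGluing (A : Set G) B {v} x y ε w ∧
          IsGluing (A : Set G) E {v} x y (2 * ε) w := by
    intro v x y hxy
    obtain ⟨w, hw⟩ := hmem v x y fun b hb =>
      (hxy b ⟨hBE hb.1, hb.2⟩).trans ((min_le_left _ _).trans (half_le_self hδ))
    refine ⟨w, hw, ?_⟩
    rw [two_mul]
    refine hw.enlarge_patch hAB hBE (separated_singleton v) hε ?_
    rintro _ rfl e he
    exact (hxy e he).trans (min_le_right _ _)
  have hη₀ : 0 ≤ η := by linarith
  refine ⟨E, (isUniformMemorySet_iff_isGluing hη₀ (by positivity)).2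
    ⟨(isMemorySet_iff_isGluing hη₀ (by positivity)).2
      ⟨hAB.trans hBE, fun v x y hxy => ?_⟩, fun V hV x y hxy => ?_⟩⟩
  · obtain ⟨w, -, hw⟩ := hsingle v x y hxy
    exact ⟨w, hw.mono subset_rfl (by linarith)⟩
  · have : Nonempty X := ⟨y⟩
    choose! w hwB hwE using fun v hv => hsingle v x y (hxy v hv)
    obtain ⟨z, hz⟩ := hB.exists_isGluing hε hδ hc hW hW' hBD hWA hDE hWD hWB hV hwB
      fun v hv b hb => (hxy v hv b ⟨hBE hb.1, hb.2⟩).trans (min_le_left _ _)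
    exact ⟨z, (hz.trans_near hwE (by positivity)).mono subset_rfl (by linarith)⟩

theorem TMP.uniformTMP (h : TMP G X) (hexp : UniformlyExpansive G X) : UniformTMP G X := by
  obtain ⟨c, hc, hwindow⟩ := hexp
  intro ε hε
  obtain ⟨δ, hδ, hmem⟩ := h (min c ε / 4) (by positivity)
  refine ⟨min (δ / 2) (min c ε / 4), by positivity, fun A => ?_⟩
  obtain ⟨B, hB⟩ := hmem A
  obtain ⟨W, hW⟩ := hwindow (min c ε / 4) (by positivity)
  obtain ⟨W', hW'⟩ := hwindow (δ / 2) (by positivity)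
  obtain ⟨E, hE⟩ := hB.exists_isUniformMemorySet (η := ε) (by positivity) hδ.le
    (by linarith [min_le_left c ε]) (by linarith [min_le_right c ε]) hW hW'
  exact ⟨E, hE⟩

end Gluing

section FullDensity

open Filter Topology

/-- The filter of sets of vertices of the disjoint union of the `Fin (n i)` whose proportion in
`Fin (n i)` tends to `1`. It turns the asymptotic conditions defining a sofic approximation into
properties holding eventually. -/
def fullDensityFilter (n : ℕ → ℕ) : Filter (Σ i, Fin (n i)) where
  sets := {s | ∀ κ > (0 : ℝ), ∀ᶠ i in atTop, ({v | ⟨i, v⟩ ∉ s}.ncard : ℝ) ≤ κ * n i}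
  univ_sets κ hκ := .of_forall fun i => by simpa using by positivity
  sets_of_superset {s t} hs hst κ hκ := by
    filter_upwards [hs κ hκ] with i hi
    have hsub : {v | (⟨i, v⟩ : Σ i, Fin (n i)) ∉ t} ⊆ {v | ⟨i, v⟩ ∉ s} :=
      fun v hv hvs => hv (hst hvs)
    exact (Nat.cast_le.2 (Set.ncard_le_ncard hsub)).trans hi
  inter_sets {s t} hs ht κ hκ := by
    filter_upwards [hs (κ / 2) (half_pos hκ), ht (κ / 2) (half_pos hκ)] with i hi hi'
    have hunion : {v | (⟨i, v⟩ : Σ i, Fin (n i)) ∉ s ∩ t} =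
        {v | ⟨i, v⟩ ∉ s} ∪ {v | ⟨i, v⟩ ∉ t} := by
      ext v
      exact not_and_or
    have hcard : ({v | (⟨i, v⟩ : Σ i, Fin (n i)) ∉ s ∩ t}.ncard : ℝ) ≤
        {v | (⟨i, v⟩ : Σ i, Fin (n i)) ∉ s}.ncard +
          {v | (⟨i, v⟩ : Σ i, Fin (n i)) ∉ t}.ncard := by
      rw [hunion]
      exact_mod_cast Set.ncard_union_le _ _
    linarith

variable {n : ℕ → ℕ}

theorem eventually_fullDensityFilter {P : (Σ i, Fin (n i)) → Prop} :
    (∀ᶠ p in fullDensityFilter n, P p) ↔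
      ∀ κ > (0 : ℝ), ∀ᶠ i in atTop, ({v | ¬P ⟨i, v⟩}.ncard : ℝ) ≤ κ * n i :=
  Iff.rfl

theorem eventually_fullDensityFilter_of_tendsto {P : ∀ i, Fin (n i) → Prop}
    [∀ i, DecidablePred (P i)]
    (h : Tendsto (fun i => ((Finset.univ.filter (P i)).card : ℝ) / n i) atTop (𝓝 1)) :
    ∀ᶠ p in fullDensityFilter n, P p.1 p.2 := by
  refine eventually_fullDensityFilter.2 fun κ hκ => ?_
  filter_upwards [h.eventually (lt_mem_nhds (sub_lt_self 1 hκ))] with i hi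
  have hcompl : ({v | ¬P i v}.ncard : ℝ) = n i - (Finset.univ.filter (P i)).card := by
    have hset : {v | ¬P i v} = ((Finset.univ.filter (P i))ᶜ : Finset _) := by
      ext v
      simp
    rw [hset, Set.ncard_coe_finset, Finset.card_compl, Fintype.card_fin,
      Nat.cast_sub (by simpa using Finset.card_le_univ (Finset.univ.filter (P i)))]
  rcases (n i).eq_zero_or_pos with hn | hn
  · have : ({v | ¬P i v}.ncard : ℝ) ≤ n i := by rw [hcompl]; simp
    simpa [hn] using this
  · rw [lt_div_iff₀ (by exact_mod_cast hn)] at hi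
    rw [hcompl]
    linarith

end FullDensity

section LocallyFree

/-- At `v` the maps `σ s`, `s ∈ S`, compose as in the group and move `v` to distinct vertices. -/
def IsLocallyFree {G α : Type*} [Mul G] (σ : G → Equiv.Perm α) (S : Set G) (v : α) : Prop :=
  ∀ s ∈ S, ∀ t ∈ S, σ (s * t) v = σ s (σ t v) ∧ (s ≠ t → σ s v ≠ σ t v)

theorem IsLocallyFree.map_one {G α : Type*} [Monoid G] {σ : G → Equiv.Perm α} {S : Set G} {v : α}
    (h : IsLocallyFree σ S v) (hS : 1 ∈ S) : σ 1 v = v :=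
  (σ 1).injective <| by simpa only [mul_one] using (h 1 hS 1 hS).1.symm

theorem SoficApprox.eventually_isLocallyFree {G : Type*} [Group G] {n : ℕ → ℕ}
    {σ : ∀ i : ℕ, G → Equiv.Perm (Fin (n i))} (h : SoficApprox G n σ) (S : Finset G) :
    ∀ᶠ p in fullDensityFilter n, IsLocallyFree (σ p.1) S p.2 := by
  refine (Filter.eventually_all_finset S).2 fun s _ => (Filter.eventually_all_finset S).2
    fun t _ => (eventually_fullDensityFilter_of_tendsto (h.2.1 s t)).and ?_
  rcases eq_or_ne s t with rfl | hst
  · exact .of_forall fun _ hne => absurd rfl hne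
  · exact (eventually_fullDensityFilter_of_tendsto (h.2.2 s t hst)).mono fun _ hp _ => hp

end LocallyFree

section SoficMap

variable {G X : Type*} [SMul G X] [PseudoMetricSpace X] {n : ℕ} {σ : G → Equiv.Perm (Fin n)}
  {φ : Fin n → X} {δ η r : ℝ}

theorem inSoficMap_iff {F : Finset G} (hδ : 0 ≤ δ) :
    InSoficMap F δ σ φ ↔ ∀ s ∈ F, ∑ v, dist (φ (σ s v)) (s • φ v) ^ 2 ≤ δ ^ 2 * n := by
  refine forall₂_congr fun s _ => ?_
  rcases n.eq_zero_or_pos with rfl | hn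
  · simpa using hδ
  · rw [Real.sqrt_le_left hδ, one_div_mul_eq_div, div_le_iff₀ (by exact_mod_cast hn)]

theorem InSoficMap.ncard_lt_dist_le {F : Finset G} (h : InSoficMap F δ σ φ) (hδ : 0 ≤ δ)
    (hη : 0 < η) {s : G} (hs : s ∈ F) :
    ({v | η < dist (φ (σ s v)) (s • φ v)}.ncard : ℝ) ≤ (δ / η) ^ 2 * n := by
  classical
  let bad := Finset.univ.filter fun v => η < dist (φ (σ s v)) (s • φ v)
  have hbad : {v | η < dist (φ (σ s v)) (s • φ v)} = bad := by simp [bad]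
  rw [hbad, Set.ncard_coe_finset, div_pow, div_mul_eq_mul_div, le_div_iff₀ (by positivity)]
  calc (bad.card : ℝ) * η ^ 2 = ∑ _v ∈ bad, η ^ 2 := by rw [Finset.sum_const, nsmul_eq_mul]
    _ ≤ ∑ v ∈ bad, dist (φ (σ s v)) (s • φ v) ^ 2 := Finset.sum_le_sum fun v hv =>
      pow_le_pow_left₀ hη.le (Finset.mem_filter.1 hv).2.le 2
    _ ≤ ∑ v, dist (φ (σ s v)) (s • φ v) ^ 2 :=
      Finset.sum_le_sum_of_subset_of_nonneg (Finset.subset_univ _) fun _ _ _ => by positivity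
    _ ≤ δ ^ 2 * n := (inSoficMap_iff hδ).1 h s hs

theorem InSoficMap.of_forall_mem_dist_le [BoundedSpace X] {F : Finset G} {good : Set (Fin n)}
    {β : ℝ} (hδ : 0 ≤ δ) (hgood : (goodᶜ.ncard : ℝ) ≤ β * n)
    (hβ : r ^ 2 + 2 * β * Metric.diam (Set.univ : Set X) ^ 2 ≤ δ ^ 2)
    (h : ∀ s ∈ F, ∀ v ∈ good, σ s v ∈ good → dist (φ (σ s v)) (s • φ v) ≤ r) :
    InSoficMap F δ σ φ := by
  classical
  refine (inSoficMap_iff hδ).2 fun s hs => ?_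
  let M := Metric.diam (Set.univ : Set X)
  let bad := Finset.univ.filter fun v => ¬(v ∈ good ∧ σ s v ∈ good)
  have hterm : ∀ v, dist (φ (σ s v)) (s • φ v) ^ 2 ≤ r ^ 2 + if v ∈ bad then M ^ 2 else 0 := by
    intro v
    split_ifs with hv
    · have hM : dist (φ (σ s v)) (s • φ v) ^ 2 ≤ M ^ 2 := by
        gcongr
        exact Metric.dist_le_diam_of_mem (.all _) (Set.mem_univ _) (Set.mem_univ _)
      linarith [sq_nonneg r]
    · obtain ⟨hv₁, hv₂⟩ : v ∈ good ∧ σ s v ∈ good := by simpa [bad] using hv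
      rw [add_zero]
      gcongr
      exact h s hs v hv₁ hv₂
  have hbad : (bad.card : ℝ) ≤ 2 * (β * n) := by
    have hset : (bad : Set (Fin n)) = goodᶜ ∪ σ s ⁻¹' goodᶜ := by
      ext v
      simp [bad, imp_iff_not_or]
    have hcard : bad.card ≤ goodᶜ.ncard + goodᶜ.ncard := by
      rw [← Set.ncard_coe_finset, hset]
      refine (Set.ncard_union_le _ _).trans_eq ?_
      rw [Set.ncard_preimage_of_injective_subset_range (σ s).injective (by simp)]
    have : (bad.card : ℝ) ≤ goodᶜ.ncard + goodᶜ.ncard := by exact_mod_cast hcard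
    linarith
  calc ∑ v, dist (φ (σ s v)) (s • φ v) ^ 2
      ≤ ∑ v, (r ^ 2 + if v ∈ bad then M ^ 2 else 0) := Finset.sum_le_sum fun v _ => hterm v
    _ = n * r ^ 2 + bad.card * M ^ 2 := by
      rw [Finset.sum_add_distrib, Finset.sum_ite_mem, Finset.univ_inter]
      simp only [Finset.sum_const, Finset.card_univ, Fintype.card_fin, nsmul_eq_mul]
    _ ≤ n * r ^ 2 + 2 * (β * n) * M ^ 2 := by gcongr
    _ = (r ^ 2 + 2 * β * M ^ 2) * n := by ring
    _ ≤ δ ^ 2 * n := by gcongr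

end SoficMap

section GoodVertices

variable {G X : Type*} [Mul G] [PseudoMetricSpace X] [SMul G X] {n : ℕ}
  {σ : G → Equiv.Perm (Fin n)} {S : Finset G} {φ : Fin n → X} {δ η : ℝ}

/-- The vertices at which `σ` is a free partial action of `S` for which `φ` is equivariant up
to `η`. -/
def goodVertices (σ : G → Equiv.Perm (Fin n)) (S : Finset G) (η : ℝ) (φ : Fin n → X) :
    Set (Fin n) :=
  {v | IsLocallyFree σ S v ∧ ∀ s ∈ S, dist (φ (σ s v)) (s • φ v) ≤ η}

theorem InSoficMap.ncard_compl_goodVertices_le (h : InSoficMap S δ σ φ) (hδ : 0 ≤ δ)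
    (hη : 0 < η) :
    ((goodVertices σ S η φ)ᶜ.ncard : ℝ) ≤
      {v | ¬IsLocallyFree σ S v}.ncard + S.card * ((δ / η) ^ 2 * n) := by
  have hset : (goodVertices σ S η φ)ᶜ =
      {v | ¬IsLocallyFree σ S v} ∪ ⋃ s ∈ S, {v | η < dist (φ (σ s v)) (s • φ v)} := by
    ext v
    simp [goodVertices, imp_iff_not_or]
  have hsum : ((⋃ s ∈ S, {v | η < dist (φ (σ s v)) (s • φ v)}).ncard : ℝ) ≤
      S.card * ((δ / η) ^ 2 * n) := by
    calc ((⋃ s ∈ S, {v | η < dist (φ (σ s v)) (s • φ v)}).ncard : ℝ)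
        ≤ ∑ s ∈ S, ({v | η < dist (φ (σ s v)) (s • φ v)}.ncard : ℝ) := by
          exact_mod_cast S.set_ncard_biUnion_le _
      _ ≤ ∑ _s ∈ S, (δ / η) ^ 2 * n := Finset.sum_le_sum fun s hs => h.ncard_lt_dist_le hδ hη hs
      _ = S.card * ((δ / η) ^ 2 * n) := by rw [Finset.sum_const, nsmul_eq_mul]
  rw [hset]
  refine le_trans ?_ (add_le_add_right hsum _)
  exact_mod_cast Set.ncard_union_le _ _

end GoodVertices

section Packing

theorem exists_pairwiseDisjoint_image_subset {ι α : Type*} (σ : ι → Equiv.Perm α)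
    {E : Finset ι} (hE : E.Nonempty) (J : Finset α) :
    ∃ J' ⊆ J, (J' : Set α).PairwiseDisjoint (fun a => (σ · a) '' (E : Set ι)) ∧
      J.card ≤ E.card * E.card * J'.card := by
  classical
  have hfin : {K : Finset α | K ⊆ J ∧
      (K : Set α).PairwiseDisjoint (fun a => (σ · a) '' (E : Set ι))}.Finite :=
    J.powerset.finite_toSet.subset fun K hK => Finset.mem_coe.2 (Finset.mem_powerset.2 hK.1)
  obtain ⟨J', ⟨hJ'J, hdisj⟩, hmax⟩ := hfin.exists_maximal ⟨∅, by simp⟩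
  have hcover : J ⊆ ((E ×ˢ E) ×ˢ J').image fun p => (σ p.1.1).symm (σ p.1.2 p.2) := by
    intro a ha
    suffices ∃ b ∈ J', ∃ e ∈ E, ∃ e' ∈ E, σ e a = σ e' b by
      obtain ⟨b, hb, e, he, e', he', heq⟩ := this
      exact Finset.mem_image.2 ⟨((e, e'), b), by simp [he, he', hb], by simp [← heq]⟩
    by_contra! hne
    have haJ' : a ∉ J' := fun h => hE.elim fun e he => hne a h e he e he rfl
    refine haJ' (hmax ⟨Finset.insert_subset ha hJ'J, ?_⟩ (Finset.subset_insert a J')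
      (Finset.mem_insert_self a J'))
    rw [Finset.coe_insert, Set.pairwiseDisjoint_insert_of_notMem (by simpa using haJ')]
    refine ⟨hdisj, fun b hb => Set.disjoint_left.2 ?_⟩
    rintro _ ⟨e, he, rfl⟩ ⟨e', he', heq⟩
    exact hne b hb e he e' he' heq.symm
  refine ⟨J', hJ'J, hdisj, (Finset.card_le_card hcover).trans (Finset.card_image_le.trans ?_)⟩
  rw [Finset.card_product, Finset.card_product]

end Packing

section Visits

/-- The elements `u` of the window `T` for which `σ u` moves `v` into `J`. They are the places at
which the points planted on `J` are seen from `v`. -/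
def visits {G α : Type*} (σ : G → Equiv.Perm α) (T : Set G) (J : Set α) (v : α) : Set G :=
  {u ∈ T | σ u v ∈ J}

variable {G α : Type*} [Monoid G] {σ : G → Equiv.Perm α} {S T A B : Set G} {J J₁ : Set α} {v : α}

theorem IsLocallyFree.separated_visits (hv : IsLocallyFree σ S v) (hBS : B ⊆ S) (hTS : T ⊆ S)
    (hJ : J.PairwiseDisjoint fun a => (σ · a) '' B) : Separated B (visits σ T J v) := by
  refine separated_iff.2 fun u hu u' hu' b hb b' hb' heq => ?_
  have hσ : σ u v = σ u' v := by
    refine hJ.elim_set hu.2 hu'.2 (σ b (σ u v)) ⟨b, hb, rfl⟩ ⟨b', hb', ?_⟩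
    simp only [← (hv _ (hBS hb) _ (hTS hu.1)).1, ← (hv _ (hBS hb') _ (hTS hu'.1)).1, heq]
  by_contra hne
  exact (hv u (hTS hu.1) u' (hTS hu'.1)).2 hne hσ

theorem IsLocallyFree.one_notMem_mul_visits (hv : IsLocallyFree σ S v) (hAB : A ⊆ B)
    (hBS : B ⊆ S) (hTS : T ⊆ S) (h1 : 1 ∈ B) (hJ₁J : J₁ ⊆ J)
    (hJ : J.PairwiseDisjoint fun a => (σ · a) '' B) (hvJ : v ∈ J \ J₁) :
    1 ∉ A * visits σ T J₁ v := by
  rintro ⟨a, ha, u, hu, hau : a * u = 1⟩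
  have hvu : v = σ u v := by
    refine hJ.elim_set hvJ.1 (hJ₁J hu.2) (σ 1 v) ⟨1, h1, rfl⟩ ⟨a, hAB ha, ?_⟩
    simp only [← (hv _ (hBS (hAB ha)) _ (hTS hu.1)).1, hau]
  exact hvJ.2 (hvu ▸ hu.2)

theorem IsLocallyFree.mem_visits_iff (hv : IsLocallyFree σ S v) (hTS : T ⊆ S) {u s : G}
    (hs : s ∈ S) (hu : u ∈ T) (hus : u * s ∈ T) :
    u ∈ visits σ T J (σ s v) ↔ u * s ∈ visits σ T J v := by
  simp only [visits, Set.mem_sep_iff, hu, hus, (hv u (hTS hu) s hs).1]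

end Visits

section Planting

theorem exists_forall_dist_smul_le {G X : Type*} [SMul G X] [PseudoMetricSpace X]
    [UniformContinuousConstSMul G X] {ε : ℝ} (H : Finset G) (hε : 0 < ε) :
    ∃ η > 0, ∀ h ∈ H, ∀ x y : X, dist x y ≤ η → dist (h • x) (h • y) ≤ ε := by
  have hev : ∀ᶠ p in uniformity X, ∀ h ∈ H, dist (h • p.1) (h • p.2) ≤ ε :=
    (Filter.eventually_all_finset H).2 fun h _ =>
      uniformContinuous_const_smul h (Metric.uniformity_basis_dist_le.mem_of_mem hε)
  obtain ⟨η, hη, hH⟩ := Metric.uniformity_basis_dist_le.mem_iff.1 hev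
  exact ⟨η, hη, fun h hh x y hxy => @hH (x, y) hxy h hh⟩

variable {G X : Type*} [Group G] [PseudoMetricSpace X] [MulAction G X] {q : X} {ε δ η c : ℝ}

/-- Where two gluings of the same point `q` use patches that differ by the translation by `s`,
both follow `q`; elsewhere they follow `p'` and `s • p`. -/
theorem IsGluing.dist_smul_le {A B V V' W : Set G} {s g : G} {p p' z z' : X}
    (hz : IsGluing A B V (fun u => u⁻¹ • q) p ε z)
    (hz' : IsGluing A B V' (fun u => u⁻¹ • q) p' ε z') (hAB : A ⊆ B)
    (hVV' : ∀ u ∈ A⁻¹ * W, u ∈ V' ↔ u * s ∈ V) (hg : g ∈ W)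
    (hpp' : dist (g • p') (g • s • p) ≤ ε) : dist (g • z') (g • s • z) ≤ 3 * ε := by
  have hε : 0 ≤ ε := dist_nonneg.trans hpp'
  have hW : ∀ a ∈ A, a⁻¹ * g ∈ A⁻¹ * W := fun a ha =>
    Set.mul_mem_mul (Set.inv_mem_inv.2 ha) hg
  by_cases hgV : g ∈ A * V'
  · obtain ⟨a, ha, u, hu, rfl⟩ := hgV
    have hus := (hVV' u (by simpa using hW a ha)).1 hu
    have h := hz.near (u * s) hus a (hAB ha)
    have h' := hz'.near u hu a (hAB ha)
    simp only [smul_smul, mul_assoc, mul_inv_rev, mul_inv_cancel_left, mul_inv_cancel,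
      mul_one] at h h' ⊢
    linarith [dist_triangle_right ((a * u) • z') ((a * (u * s)) • z) (a • q)]
  · have hgs : g * s ∉ A * V := by
      rintro ⟨a, ha, w, hw, heq : a * w = g * s⟩
      refine hgV ⟨a, ha, a⁻¹ * g, (hVV' _ (hW a ha)).2 ?_, mul_inv_cancel_left a g⟩
      rwa [mul_assoc, ← heq, inv_mul_cancel_left]
    have h := hz.far _ hgs
    have h' := hz'.far _ hgV
    rw [mul_smul, mul_smul] at h
    linarith [dist_triangle4_right (g • z') (g • s • z) (g • p') (g • s • p)]

/-- `ψ` is obtained from `φ` by planting `q` at the vertices in `J₁`, and keeps the values of `φ`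
at the other vertices of `J`, up to `ε`. -/
structure IsPlanting {α : Type*} (J J₁ : Set α) (q : X) (ε : ℝ) (φ ψ : α → X) : Prop where
  planted : ∀ a ∈ J₁, dist (ψ a) q ≤ ε
  kept : ∀ a ∈ J \ J₁, dist (ψ a) (φ a) ≤ ε

variable {n : ℕ} {σ : G → Equiv.Perm (Fin n)} {S A B : Finset G} {T : Set G}
  {φ : Fin n → X} {J J₁ : Set (Fin n)}

theorem IsUniformMemorySet.exists_isGluing_visits [BoundedSpace X] {v : Fin n}
    (hB : IsUniformMemorySet G X ε δ A B) (hε : 0 ≤ ε) (hδ : 0 ≤ δ)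
    (hv : v ∈ goodVertices σ S η φ) (hBS : B ⊆ S) (hTS : T ⊆ S)
    (hJ : J.PairwiseDisjoint fun a => (σ · a) '' (B : Set G))
    (hη : ∀ b ∈ B, ∀ x y : X, dist x y ≤ η → dist (b • x) (b • y) ≤ δ / 2)
    (hφ : ∀ a ∈ J, ∀ b ∈ (B : Set G) \ A, dist (b • φ a) (b • q) ≤ δ / 2) :
    ∃ z, IsGluing (A : Set G) B (visits σ T J v) (fun u => u⁻¹ • q) (φ v) ε z := by
  have hsep := hv.1.separated_visits (Finset.coe_subset.2 hBS) hTS hJ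
  have hclose : ∀ u ∈ visits σ T J v, ∀ b ∈ (B : Set G) \ A,
      dist ((b * u) • u⁻¹ • q) ((b * u) • φ v) ≤ δ := by
    intro u hu b hb
    have hequiv := hη b hb.1 _ _ (hv.2 u (hTS hu.1))
    have hq := hφ _ hu.2 b hb
    rw [mul_smul, mul_smul, smul_inv_smul]
    linarith [dist_triangle_left (b • q) (b • u • φ v) (b • φ (σ u v))]
  have hfin : (visits σ T J v).Finite := S.finite_toSet.subset fun u hu => hTS hu.1
  lift visits σ T J v to Finset G using hfin with V
  exact ((isUniformMemorySet_iff_isGluing hε hδ).1 hB).2 V hsep _ _ hclose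

theorem IsUniformMemorySet.exists_isPlanting [BoundedSpace X]
    (hB : IsUniformMemorySet G X ε δ A B) (hε : 0 ≤ ε) (hδ : 0 ≤ δ) (hA : 1 ∈ A)
    (hBS : B ⊆ S) (hTS : T ⊆ S) (hT : 1 ∈ T) (hJ₁J : J₁ ⊆ J)
    (hJ : J.PairwiseDisjoint fun a => (σ · a) '' (B : Set G))
    (hη : ∀ b ∈ B, ∀ x y : X, dist x y ≤ η → dist (b • x) (b • y) ≤ δ / 2)
    (hφ : ∀ a ∈ J₁, ∀ b ∈ (B : Set G) \ A, dist (b • φ a) (b • q) ≤ δ / 2) :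
    ∃ ψ : Fin n → X, IsPlanting J J₁ q ε φ ψ ∧ ∀ v ∈ goodVertices σ S η φ,
      IsGluing (A : Set G) B (visits σ T J₁ v) (fun u => u⁻¹ • q) (φ v) ε (ψ v) := by
  have hAB : (A : Set G) ⊆ B := hB.1.1
  have hvertex : ∀ v, ∃ z, (v ∈ J₁ → dist z q ≤ ε) ∧ (v ∈ J \ J₁ → dist z (φ v) ≤ ε) ∧
      (v ∈ goodVertices σ S η φ →
        IsGluing (A : Set G) B (visits σ T J₁ v) (fun u => u⁻¹ • q) (φ v) ε z) := by
    intro v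
    by_cases hv : v ∈ goodVertices σ S η φ
    · obtain ⟨z, hz⟩ := hB.exists_isGluing_visits hε hδ hv hBS hTS (hJ.subset hJ₁J) hη hφ
      refine ⟨z, fun hvJ₁ => ?_, fun hvJ => ?_, fun _ => hz⟩
      · have h1 : 1 ∈ visits σ T J₁ v := ⟨hT, (hv.1.map_one (hTS hT)).symm ▸ hvJ₁⟩
        simpa using hz.near 1 h1 1 (hAB hA)
      · simpa using hz.far 1
          (hv.1.one_notMem_mul_visits hAB (Finset.coe_subset.2 hBS) hTS (hAB hA) hJ₁J hJ hvJ)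
    · by_cases hvJ₁ : v ∈ J₁
      · exact ⟨q, fun _ => by simpa, fun h => absurd hvJ₁ h.2, fun h => absurd h hv⟩
      · exact ⟨φ v, fun h => absurd h hvJ₁, fun _ => by simpa, fun h => absurd h hv⟩
  choose ψ hplanted hkept hψ using hvertex
  exact ⟨ψ, ⟨hplanted, hkept⟩, hψ⟩

theorem InSoficMap.of_isGluing_visits [BoundedSpace X] {F : Finset G} {W : Set G} {r β : ℝ}
    {ψ : Fin n → X}
    (hψ : ∀ v ∈ goodVertices σ S η φ,
      IsGluing (A : Set G) B (visits σ T J v) (fun u => u⁻¹ • q) (φ v) ε (ψ v))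
    (hAB : A ⊆ B) (hFS : F ⊆ S) (hTS : T ⊆ S) (hWT : (A : Set G)⁻¹ * W ⊆ T)
    (hWFT : (A : Set G)⁻¹ * W * F ⊆ T) (hW : IsExpansivityWindow X W c r) (hc : 3 * ε ≤ c)
    (hη : ∀ g ∈ W, ∀ x y : X, dist x y ≤ η → dist (g • x) (g • y) ≤ ε) (hδ : 0 ≤ δ)
    (hgood : ((goodVertices σ S η φ)ᶜ.ncard : ℝ) ≤ β * n)
    (hβ : r ^ 2 + 2 * β * Metric.diam (Set.univ : Set X) ^ 2 ≤ δ ^ 2) :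
    InSoficMap F δ σ ψ := by
  refine .of_forall_mem_dist_le hδ hgood hβ fun s hs v hv hsv => hW _ _ fun g hg => ?_
  have hvisits : ∀ u ∈ (A : Set G)⁻¹ * W, u ∈ visits σ T J (σ s v) ↔ u * s ∈ visits σ T J v :=
    fun u hu => hv.1.mem_visits_iff hTS (hFS hs) (hWT hu) (hWFT (Set.mul_mem_mul hu hs))
  exact ((hψ v hv).dist_smul_le (hψ _ hsv) hAB hvisits hg (hη g hg _ _ (hv.2 s (hFS hs)))).trans hc

theorem IsUniformMemorySet.exists_inSoficMap_isPlanting [BoundedSpace X]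
    [UniformContinuousConstSMul G X] {δ₀ : ℝ} (hB : IsUniformMemorySet G X ε δ A B)
    (hε : 0 < ε) (hδ : 0 < δ) (hA : 1 ∈ A) (hc : 3 * ε ≤ c)
    (hwindow : ∀ r > (0 : ℝ), ∃ W : Finset G, IsExpansivityWindow X (W : Set G) c r)
    (F : Finset G) (hδ₀ : 0 < δ₀) :
    ∃ S : Finset G, ∃ δ₁ > 0, ∃ β > 0, ∀ {n : ℕ} {σ : G → Equiv.Perm (Fin n)} {φ : Fin n → X}
      {J J₁ : Set (Fin n)}, ({v | ¬IsLocallyFree σ S v}.ncard : ℝ) ≤ β * n →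
      InSoficMap S δ₁ σ φ → J.PairwiseDisjoint (fun a => (σ · a) '' (B : Set G)) → J₁ ⊆ J →
      (∀ a ∈ J₁, ∀ b ∈ (B : Set G) \ A, dist (b • φ a) (b • q) ≤ δ / 2) →
      ∃ ψ, InSoficMap F δ₀ σ ψ ∧ IsPlanting J J₁ q ε φ ψ := by
  classical
  obtain ⟨W, hW⟩ := hwindow (δ₀ / 2) (half_pos hδ₀)
  obtain ⟨ηW, hηW, hcontW⟩ := exists_forall_dist_smul_le (X := X) W hε
  obtain ⟨ηB, hηB, hcontB⟩ := exists_forall_dist_smul_le (X := X) B (half_pos hδ)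
  let η := min ηW ηB
  let T := {1} ∪ A⁻¹ * W ∪ A⁻¹ * W * F
  let S := F ∪ T ∪ B
  have hFS : F ⊆ S := Finset.subset_union_left.trans Finset.subset_union_left
  have hTS : (T : Set G) ⊆ S :=
    Finset.coe_subset.2 (Finset.subset_union_right.trans Finset.subset_union_left)
  have hBS : B ⊆ S := Finset.subset_union_right
  have hT : (1 : G) ∈ (T : Set G) := by simp [T]
  have hWT : (A : Set G)⁻¹ * W ⊆ T := by
    exact_mod_cast Finset.subset_union_right.trans Finset.subset_union_left
  have hWFT : (A : Set G)⁻¹ * W * F ⊆ T := by exact_mod_cast Finset.subset_union_right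
  obtain ⟨β, hβ, hβδ₀⟩ := exists_pos_mul_lt (show 0 < 3 / 4 * δ₀ ^ 2 by positivity)
    (4 * Metric.diam (Set.univ : Set X) ^ 2)
  obtain ⟨t, ht, htβ⟩ := exists_pos_mul_lt hβ S.card
  refine ⟨S, η * √t, by positivity, β, hβ, fun {n σ φ J J₁} hfree hφ hJ hJ₁J hq => ?_⟩
  have hgood : ((goodVertices σ S η φ)ᶜ.ncard : ℝ) ≤ 2 * β * n := by
    have hcard := hφ.ncard_compl_goodVertices_le (by positivity) (show 0 < η by positivity)
    rw [mul_div_cancel_left₀ _ (show η ≠ 0 by positivity), Real.sq_sqrt ht.le, ← mul_assoc] at hcard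
    have : S.card * t * n ≤ β * n := by gcongr
    linarith
  obtain ⟨ψ, hplant, hψ⟩ := hB.exists_isPlanting hε.le hδ.le hA hBS hTS hT hJ₁J hJ
    (fun b hb x y hxy => hcontB b hb x y (hxy.trans (min_le_right _ _))) hq
  exact ⟨ψ, .of_isGluing_visits hψ hB.1.1 hFS hTS hWT hWFT hW hc
    (fun g hg x y hxy => hcontW g hg x y (hxy.trans (min_le_left _ _))) hδ₀.le hgood
    (by linarith), hplant⟩

end Planting

section IndependenceSets

theorem SoficIndepSet.of_forall_planting {G X : Type*} [SMul G X] [PseudoMetricSpace X] {m n : ℕ}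
    {U : Fin (m + 1) → Set X} {U' : Fin m → Set X} {F S : Finset G} {δ₀ δ₁ : ℝ}
    {σ : G → Equiv.Perm (Fin n)} {J J' : Finset (Fin n)} (j : Fin m)
    (hJ : SoficIndepSet U' S δ₁ σ J) (hJ'J : J' ⊆ J)
    (hplant : ∀ φ, InSoficMap S δ₁ σ φ → ∀ J₁ ⊆ (J' : Set (Fin n)), (∀ a ∈ J₁, φ a ∈ U' j) →
      ∃ ψ, InSoficMap F δ₀ σ ψ ∧ (∀ a ∈ J₁, ψ a ∈ U (Fin.last m)) ∧
        ∀ a ∈ (J' : Set (Fin n)) \ J₁, ∀ i, φ a ∈ U' i → ψ a ∈ U i.castSucc) :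
    SoficIndepSet U F δ₀ σ J' := by
  intro ω
  obtain ⟨φ, hφ, hφU⟩ := hJ fun a => Fin.lastCases j id (ω a)
  obtain ⟨ψ, hψ, hlast, hcast⟩ := hplant φ hφ {a ∈ (J' : Set (Fin n)) | ω a = Fin.last m}
    (Set.sep_subset _ _) fun a ha => by simpa [ha.2] using hφU a (hJ'J ha.1)
  refine ⟨ψ, hψ, fun a ha => ?_⟩
  have haU := hφU a (hJ'J ha)
  induction hω : ω a using Fin.lastCases with
  | last => exact hlast a ⟨ha, hω⟩
  | cast i =>
    have hne : ω a ≠ Fin.last m := hω ▸ i.castSucc_ne_last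
    exact hcast a ⟨ha, fun h => hne h.2⟩ i (by simpa [hω] using haU)

theorem exists_forall_ball_subset {ι X : Type*} [Finite ι] [PseudoMetricSpace X] {U : ι → Set X}
    {x : ι → X} (hU : ∀ i, U i ∈ nhds (x i)) : ∃ r > 0, ∀ i, Metric.ball (x i) r ⊆ U i := by
  choose r hr hrU using fun i => Metric.mem_nhds_iff.1 (hU i)
  obtain ⟨s, hs, hsr⟩ := Pi.exists_forall_pos_add_lt hr
  exact ⟨s, hs, fun i => (Metric.ball_subset_ball <| by simpa using (hsr i).le).trans (hrU i)⟩

theorem PosUpperIndepDensity.of_isUniformMemorySet {G X : Type*} [Group G] [PseudoMetricSpace X]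
    [BoundedSpace X] [MulAction G X] [UniformContinuousConstSMul G X] {n : ℕ → ℕ}
    {σ : ∀ i : ℕ, G → Equiv.Perm (Fin (n i))} {m : ℕ} {U : Fin (m + 1) → Set X}
    {U' : Fin m → Set X} {q : X} {ε δ c : ℝ} {A B : Finset G} (j : Fin m)
    (hU' : PosUpperIndepDensity U' n σ) (hsofic : SoficApprox G n σ)
    (hB : IsUniformMemorySet G X ε δ A B) (hε : 0 < ε) (hδ : 0 < δ) (hA : 1 ∈ A) (hc : 3 * ε ≤ c)
    (hwindow : ∀ r > (0 : ℝ), ∃ W : Finset G, IsExpansivityWindow X (W : Set G) c r)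
    (hq : ∀ z ∈ U' j, ∀ b ∈ (B : Set G) \ A, dist (b • z) (b • q) ≤ δ / 2)
    (hlast : ∀ z, dist z q ≤ ε → z ∈ U (Fin.last m))
    (hcast : ∀ i, ∀ z ∈ U' i, ∀ w, dist w z ≤ ε → w ∈ U i.castSucc) :
    PosUpperIndepDensity U n σ := by
  obtain ⟨κ, hκ, hind⟩ := hU'
  have hBne : B.Nonempty := ⟨1, hB.1.1 hA⟩
  have hBcard : (0 : ℝ) < B.card * B.card := by
    have := hBne.card_pos
    positivity
  refine ⟨κ / (B.card * B.card), by positivity, fun F δ₀ hδ₀ => ?_⟩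
  obtain ⟨S, δ₁, hδ₁, β, hβ, hplant⟩ :=
    hB.exists_inSoficMap_isPlanting (q := q) hε hδ hA hc hwindow F hδ₀
  have hfree := eventually_fullDensityFilter.1 (hsofic.eventually_isLocallyFree S) β hβ
  have hfreq := Nat.frequently_atTop_iff_infinite.2 (hind S δ₁ hδ₁)
  refine Nat.frequently_atTop_iff_infinite.1 ((hfreq.and_eventually hfree).mono fun i hi => ?_)
  obtain ⟨⟨J, hJcard, hJ⟩, hfree_i⟩ := hi
  obtain ⟨J', hJ'J, hdisj, hcard⟩ := exists_pairwiseDisjoint_image_subset (σ i) hBne J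
  refine ⟨J', ?_, hJ.of_forall_planting j hJ'J fun φ hφ J₁ hJ₁ hφU => ?_⟩
  · have hcard' : (J.card : ℝ) ≤ B.card * B.card * J'.card := by exact_mod_cast hcard
    rw [div_mul_eq_mul_div, div_le_iff₀' hBcard]
    exact hJcard.trans hcard'
  · obtain ⟨ψ, hψ, hψφ⟩ := hplant (σ := σ i) hfree_i hφ hdisj hJ₁ fun a ha => hq _ (hφU a ha)
    exact ⟨ψ, hψ, fun a ha => hlast _ (hψφ.planted a ha),
      fun a ha i hai => hcast i _ hai _ (hψφ.kept a ha)⟩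

end IndependenceSets

theorem stmt15_general {G X : Type*} [Group G] [PseudoMetricSpace X] [BoundedSpace X]
    [MulAction G X] [UniformContinuousConstSMul G X] {n : ℕ → ℕ}
    {σ : ∀ i : ℕ, G → Equiv.Perm (Fin (n i))} (hsofic : SoficApprox G n σ)
    (hexp : UniformlyExpansive G X) (htmp : TMP G X) {m : ℕ} {x : Fin m → X} {y : X} (j : Fin m)
    (hIE : SigmaIETuple n σ x) (hasym : Asymptotic G (x j) y) :
    SigmaIETuple n σ (Fin.snoc x y : Fin (m + 1) → X) := by
  classical
  intro U hU hxU
  obtain ⟨r, hr, hrU⟩ := exists_forall_ball_subset fun i => (hU i).mem_nhds (hxU i)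
  obtain ⟨c, hc, hwindow⟩ := hexp
  obtain ⟨δ, hδ, hmem⟩ := htmp.uniformTMP ⟨c, hc, hwindow⟩ (min (c / 3) (r / 3)) (by positivity)
  obtain ⟨A, hA⟩ := hasym (δ / 4) (by positivity)
  obtain ⟨B, hB⟩ := hmem (insert 1 A)
  have h1 : 1 ∈ B := hB.1.1 (Finset.mem_insert_self 1 A)
  let U' : Fin m → Set X := fun i =>
    ⋂ b ∈ B, (b • ·) ⁻¹' Metric.ball (b • x i) (min (r / 2) (δ / 4))
  have hU' : PosUpperIndepDensity U' n σ := hIE U'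
    (fun i => isOpen_biInter_finset fun b _ =>
      Metric.isOpen_ball.preimage (continuous_const_smul b))
    (fun i => Set.mem_iInter₂.2 fun b _ => Metric.mem_ball_self (by positivity))
  refine hU'.of_isUniformMemorySet (q := y) j hsofic hB (by positivity) hδ
    (Finset.mem_insert_self 1 A) (by linarith [min_le_left (c / 3) (r / 3)]) hwindow
    (fun z hz b hb => ?_) (fun z hz => ?_) fun i z hz w hwz => ?_
  · have hzx : dist (b • z) (b • x j) < min (r / 2) (δ / 4) := Set.mem_iInter₂.1 hz b hb.1
    have hxy := hA b fun h => hb.2 (Finset.mem_insert_of_mem h)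
    linarith [dist_triangle (b • z) (b • x j) (b • y), min_le_right (r / 2) (δ / 4)]
  · refine hrU _ ?_
    rw [Fin.snoc_last, Metric.mem_ball]
    linarith [min_le_right (c / 3) (r / 3)]
  · have hzx : dist z (x i) < min (r / 2) (δ / 4) := by simpa using Set.mem_iInter₂.1 hz 1 h1
    refine hrU _ ?_
    rw [Fin.snoc_castSucc, Metric.mem_ball]
    linarith [dist_triangle w z (x i), min_le_right (c / 3) (r / 3), min_le_left (r / 2) (δ / 4)]

/-- Let `G` be a sofic countably infinite group with sofic approximation
sequence `Σ`, and let `G ↷ X` be expansive with the TMP.  If `(x₁,…,x_k)` is a `Σ`-IE-tuple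
and `(x_k, y)` is an asymptotic pair, then `(x₁,…,x_k,y)` is a `Σ`-IE-tuple. -/
theorem stmt15 (G X : Type*) [Group G] [Countable G] [Infinite G]
    [MetricSpace X] [CompactSpace X] [MulAction G X]
    (hcont : ∀ g : G, Continuous fun x : X => g • x)
    (n : ℕ → ℕ) (σ : ∀ i : ℕ, G → Equiv.Perm (Fin (n i)))
    (hsofic : SoficApprox G n σ)
    (hexp : Expansive G X) (htmp : TMP G X)
    (k : ℕ) (x : Fin (k + 1) → X) (y : X)
    (hIE : SigmaIETuple n σ x) (hasym : Asymptotic G (x (Fin.last k)) y) :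
    SigmaIETuple n σ (Fin.snoc x y) := by
  have : ContinuousConstSMul G X := ⟨hcont⟩
  have : UniformContinuousConstSMul G X :=
    ⟨fun g => CompactSpace.uniformContinuous_of_continuous (hcont g)⟩
  exact stmt15_general hsofic hexp.uniformlyExpansive htmp (Fin.last k) hIE hasym
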